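/- arXiv:2207.04620 — 7 statements merged into one kernel-verified Lean document; each statement's English description precedes it below -/
import Mathlib

section
/- For every integer d ≥ 1 and every real x, the derivative of g_d at x equals p_d·(1 − x²)^d, i.e., g_d'(x) = p_d·(1 − x²)^d. -/
noncomputable def g (d : ℕ) : ℝ → ℝ :=
  fun m => ∑ i ∈ Finset.range (d + 1),
    (1 / 4 ^ i : ℝ) * (Nat.choose (2 * i) i) * (m * (1 - m ^ 2) ^ i)

noncomputable def p (d : ℕ) : ℝ :=
  ∑ i ∈ Finset.range (d + 1), (1 / 4 ^ i : ℝ) * (Nat.choose (2 * i) i)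

theorem c_succ (d : ℕ) : (2 * (d:ℝ) + 2) * ((1 / 4 ^ (d+1) : ℝ) * (Nat.choose (2 * (d+1)) (d+1)))
    = (2 * d + 1) * ((1 / 4 ^ d : ℝ) * (Nat.choose (2 * d) d)) := by
  have h := Nat.succ_mul_centralBinom_succ d
  simp only [Nat.centralBinom] at h
  have h' : ((d:ℝ) + 1) * (Nat.choose (2 * (d+1)) (d+1)) = 2 * (2 * d + 1) * (Nat.choose (2 * d) d) := by
    exact_mod_cast h
  rw [pow_succ]
  field_simp
  linear_combination 2 * h'

theorem p_eq (d : ℕ) : p d = (2 * d + 1) * ((1 / 4 ^ d : ℝ) * (Nat.choose (2 * d) d)) := by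
  induction d with
  | zero => simp [p]
  | succ d ih =>
    have e : p (d+1) = p d + (1 / 4 ^ (d+1) : ℝ) * (Nat.choose (2 * (d+1)) (d+1)) := by
      unfold p; rw [Finset.sum_range_succ]
    rw [e, ih, ← c_succ]
    push_cast
    ring

theorem g_deriv (d : ℕ) (x : ℝ) : HasDerivAt (g d) (p d * (1 - x ^ 2) ^ d) x := by
  induction d with
  | zero =>
    have e : g 0 = fun m => m := by funext m; simp [g]
    rw [e]
    simpa [p] using hasDerivAt_id' x
  | succ d ih =>
    have e : g (d+1) = fun m => g d m + (1 / 4 ^ (d+1) : ℝ) * (Nat.choose (2 * (d+1)) (d+1))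
        * (m * (1 - m ^ 2) ^ (d+1)) := by
      funext m; unfold g; rw [Finset.sum_range_succ]
    rw [e]
    have h1 := (((hasDerivAt_id' x).fun_pow 2).const_sub 1).fun_pow (d+1)
    have h2 := ih.fun_add (((hasDerivAt_id' x).fun_mul h1).const_mul
      ((1 / 4 ^ (d+1) : ℝ) * (Nat.choose (2 * (d+1)) (d+1))))
    refine h2.congr_deriv ?_
    rw [p_eq (d+1), p_eq d, ← c_succ]
    generalize (1 / 4 ^ (d+1) : ℝ) * (Nat.choose (2 * (d+1)) (d+1)) = c
    push_cast
    ring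

theorem stmt_1 (d : ℕ) (hd : 1 ≤ d) (x : ℝ) :
    HasDerivAt (g d) (p d * (1 - x ^ 2) ^ d) x := by
  exact g_deriv d x
end

section
/- Let d ≥ 1 be an integer, δ ∈ (0, 1], and σ ≥ 1 a real number. Suppose k₁, k₂ are natural numbers such that (p_d)^{k₁} ≥ 2/δ and (d+1)^{k₂} ≥ σ − 1. Then for every real m with δ ≤ |m| ≤ 1, |g_d^{(k₁+k₂)}(m) − sgn(m)| ≤ 2^{−σ}; that is, g_d^{(k₁+k₂)} is (σ, δ)-close to the sign function on [−1, 1]. -/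
noncomputable def sgn (m : ℝ) : ℝ :=
  if m > 0 then 1 else if m = 0 then 0 else -1

/-- The coefficients `C(2i,i)/4^i`. -/
noncomputable def cc (i : ℕ) : ℝ := (1 / 4 ^ i : ℝ) * (Nat.choose (2 * i) i)

lemma cc_nonneg (i : ℕ) : 0 ≤ cc i := by unfold cc; positivity

lemma cc_zero : cc 0 = 1 := by simp [cc]

lemma cc_succ (i : ℕ) : ((i : ℝ) + 1) * cc (i + 1) = ((i : ℝ) + 1 / 2) * cc i := by
  have h := Nat.succ_mul_centralBinom_succ i
  simp only [Nat.centralBinom] at h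
  have h' : ((i : ℝ) + 1) * (Nat.choose (2 * (i + 1)) (i + 1) : ℝ)
      = 2 * (2 * i + 1) * (Nat.choose (2 * i) i : ℝ) := by exact_mod_cast h
  unfold cc
  have h4 : (4 : ℝ) ^ i ≠ 0 := by positivity
  rw [pow_succ]
  field_simp
  linarith

/-- Convolution `∑ c_i c_{n-i}`. -/
noncomputable def conv2 (n : ℕ) : ℝ := ∑ x ∈ Finset.HasAntidiagonal.antidiagonal n, cc x.1 * cc x.2

lemma conv2_half (n : ℕ) :
    ∑ x ∈ Finset.HasAntidiagonal.antidiagonal n, (x.1 : ℝ) * (cc x.1 * cc x.2) = (n : ℝ) / 2 * conv2 n := by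
  have h1 : ∑ x ∈ Finset.HasAntidiagonal.antidiagonal n, (x.1 : ℝ) * (cc x.1 * cc x.2)
      = ∑ x ∈ Finset.HasAntidiagonal.antidiagonal n, (x.2 : ℝ) * (cc x.1 * cc x.2) := by
    rw [← Finset.Nat.sum_antidiagonal_swap]
    refine Finset.sum_congr rfl fun x _ => ?_
    simp only [Prod.fst_swap, Prod.snd_swap]
    ring
  have h2 : ∑ x ∈ Finset.HasAntidiagonal.antidiagonal n, (x.1 : ℝ) * (cc x.1 * cc x.2)
      + ∑ x ∈ Finset.HasAntidiagonal.antidiagonal n, (x.2 : ℝ) * (cc x.1 * cc x.2) = n * conv2 n := by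
    rw [← Finset.sum_add_distrib, conv2, Finset.mul_sum]
    refine Finset.sum_congr rfl fun x hx => ?_
    have : x.1 + x.2 = n := Finset.HasAntidiagonal.mem_antidiagonal.1 hx
    rw [← this]
    push_cast
    ring
  linarith

lemma conv2_eq (n : ℕ) : conv2 n = 1 := by
  induction n with
  | zero => simp [conv2, cc_zero]
  | succ n ih =>
    have h1 := conv2_half (n + 1)
    rw [Finset.Nat.sum_antidiagonal_succ] at h1
    have h2 : ∑ x ∈ Finset.HasAntidiagonal.antidiagonal n, ((x.1 + 1 : ℕ) : ℝ) * (cc (x.1 + 1) * cc x.2)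
        = ∑ x ∈ Finset.HasAntidiagonal.antidiagonal n, (x.1 : ℝ) * (cc x.1 * cc x.2) + 1 / 2 * conv2 n := by
      rw [conv2, Finset.mul_sum, ← Finset.sum_add_distrib]
      refine Finset.sum_congr rfl fun x _ => ?_
      have := cc_succ x.1
      push_cast
      rw [← mul_assoc, this]
      ring
    rw [h2, conv2_half, ih] at h1
    push_cast at h1
    have h3 : ((n : ℝ) + 1) * (conv2 (n + 1) - 1) = 0 := by linarith
    have h4 : (n : ℝ) + 1 ≠ 0 := by positivity
    have := (mul_eq_zero.1 h3).resolve_left h4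
    linarith

/-- The truncated series of `(1-e)^(-1/2)`. -/
noncomputable def qq (d : ℕ) (e : ℝ) : ℝ := ∑ i ∈ Finset.range (d + 1), cc i * e ^ i

lemma g_eq (d : ℕ) (m : ℝ) : g d m = m * qq d (1 - m ^ 2) := by
  simp only [g, qq, cc, Finset.mul_sum]
  refine Finset.sum_congr rfl fun i _ => ?_
  ring

lemma qq_sq (d : ℕ) (e : ℝ) : qq d e ^ 2 =
    ∑ x ∈ Finset.range (d + 1) ×ˢ Finset.range (d + 1), cc x.1 * cc x.2 * e ^ (x.1 + x.2) := by
  rw [sq, qq, Finset.sum_mul_sum, Finset.sum_product]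
  refine Finset.sum_congr rfl fun i _ => Finset.sum_congr rfl fun j _ => ?_
  rw [pow_add]; ring

lemma geom_conv (N : ℕ) (e : ℝ) : ∑ n ∈ Finset.range N, e ^ n =
    ∑ s ∈ (Finset.range N).sigma (fun n => Finset.HasAntidiagonal.antidiagonal n),
      cc s.2.1 * cc s.2.2 * e ^ (s.2.1 + s.2.2) := by
  rw [Finset.sum_sigma]
  refine Finset.sum_congr rfl fun n _ => ?_
  have h := conv2_eq n
  calc e ^ n = conv2 n * e ^ n := by rw [h, one_mul]
    _ = _ := by
      rw [conv2, Finset.sum_mul]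
      refine Finset.sum_congr rfl fun x hx => ?_
      rw [Finset.HasAntidiagonal.mem_antidiagonal.1 hx]

lemma geom_conv' (N : ℕ) (e : ℝ) : ∑ n ∈ Finset.range N, e ^ n =
    ∑ x ∈ (Finset.range N ×ˢ Finset.range N).filter (fun x => x.1 + x.2 < N),
      cc x.1 * cc x.2 * e ^ (x.1 + x.2) := by
  rw [geom_conv]
  refine Finset.sum_bij' (fun s _ => s.2) (fun x _ => ⟨x.1 + x.2, x⟩) ?_ ?_ ?_ ?_ ?_
  · rintro ⟨n, a, b⟩ h
    simp at h ⊢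
    omega
  · rintro ⟨a, b⟩ h
    simp at h ⊢
    omega
  · rintro ⟨n, a, b⟩ h
    simp at h ⊢
    omega
  · rintro ⟨a, b⟩ h
    rfl
  · rintro ⟨n, a, b⟩ h
    rfl

lemma geom_le_qq (d : ℕ) (e : ℝ) (he : 0 ≤ e) :
    ∑ n ∈ Finset.range (d + 1), e ^ n ≤ qq d e ^ 2 := by
  rw [qq_sq, geom_conv']
  refine Finset.sum_le_sum_of_subset_of_nonneg (Finset.filter_subset _ _) fun x _ _ => ?_
  exact mul_nonneg (mul_nonneg (cc_nonneg _) (cc_nonneg _)) (pow_nonneg he _)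

lemma qq_le_geom (d : ℕ) (e : ℝ) (he : 0 ≤ e) :
    qq d e ^ 2 ≤ ∑ n ∈ Finset.range (2 * d + 1), e ^ n := by
  rw [qq_sq, geom_conv']
  refine Finset.sum_le_sum_of_subset_of_nonneg ?_ fun x _ _ => ?_
  · rintro ⟨a, b⟩ h
    simp at h ⊢
    omega
  · exact mul_nonneg (mul_nonneg (cc_nonneg _) (cc_nonneg _)) (pow_nonneg he _)

lemma qq_nonneg (d : ℕ) (e : ℝ) (he : 0 ≤ e) : 0 ≤ qq d e :=
  Finset.sum_nonneg fun i _ => mul_nonneg (cc_nonneg _) (pow_nonneg he _)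

lemma qq_ge (d : ℕ) (e : ℝ) (he : 0 ≤ e) (he1 : e ≤ 1) : p d * e ^ d ≤ qq d e := by
  rw [p, qq, Finset.sum_mul]
  refine Finset.sum_le_sum fun i hi => ?_
  refine mul_le_mul_of_nonneg_left ?_ (cc_nonneg i)
  exact pow_le_pow_of_le_one he he1 (by simp at hi; omega)

lemma p_nonneg (d : ℕ) : 0 ≤ p d := Finset.sum_nonneg fun i _ => cc_nonneg i

lemma g_facts (d : ℕ) (m : ℝ) (h0 : 0 ≤ m) (h1 : m ≤ 1) :
    0 ≤ g d m ∧ g d m ≤ 1 ∧ p d * m * (1 - m ^ 2) ^ d ≤ g d m ∧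
      1 - g d m ^ 2 ≤ (1 - m ^ 2) ^ (d + 1) := by
  have he : 0 ≤ 1 - m ^ 2 := by nlinarith
  have he1 : 1 - m ^ 2 ≤ 1 := by nlinarith
  have hm2 := sq_nonneg m
  have hg0 : 0 ≤ g d m := by rw [g_eq]; exact mul_nonneg h0 (qq_nonneg d _ he)
  have hsq : g d m ^ 2 = (1 - (1 - m ^ 2)) * qq d (1 - m ^ 2) ^ 2 := by rw [g_eq]; ring
  have hA := geom_le_qq d _ he
  have hB := qq_le_geom d _ he
  have hC := qq_ge d _ he he1
  rw [g_eq] at *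
  generalize 1 - m ^ 2 = e at *
  have hs : 0 ≤ 1 - e := by linarith
  have gA := mul_neg_geom_sum e (d + 1)
  have gB := mul_neg_geom_sum e (2 * d + 1)
  have hA' := mul_le_mul_of_nonneg_left hA hs
  have hB' := mul_le_mul_of_nonneg_left hB hs
  rw [gA] at hA'
  rw [gB] at hB'
  have : 0 ≤ e ^ (2 * d + 1) := pow_nonneg he _
  refine ⟨hg0, ?_, ?_, ?_⟩
  · by_contra! hlt
    nlinarith
  · calc p d * m * e ^ d = m * (p d * e ^ d) := by ring
      _ ≤ _ := mul_le_mul_of_nonneg_left hC h0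
  · linarith

lemma phase1 (d : ℕ) (δ m : ℝ) (hδ0 : 0 < δ) (hm : δ ≤ m) (hm1 : m ≤ 1) (k : ℕ) :
    0 ≤ (g d)^[k] m ∧ (g d)^[k] m ≤ 1 ∧
      p d ^ k * δ * (1 - ((g d)^[k] m) ^ 2) ≤ (g d)^[k] m := by
  induction k with
  | zero =>
    refine ⟨by simp; linarith, by simpa using hm1, ?_⟩
    simp
    nlinarith [sq_nonneg m, mul_nonneg hδ0.le (sq_nonneg m)]
  | succ k ih =>
    rw [Function.iterate_succ_apply']
    obtain ⟨a, b, c⟩ := ih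
    generalize (g d)^[k] m = x at *
    obtain ⟨f1, f2, f3, f4⟩ := g_facts d x a b
    refine ⟨f1, f2, ?_⟩
    have he : 0 ≤ 1 - x ^ 2 := by nlinarith
    have hp := p_nonneg d
    calc p d ^ (k + 1) * δ * (1 - g d x ^ 2)
        ≤ p d ^ (k + 1) * δ * (1 - x ^ 2) ^ (d + 1) :=
          mul_le_mul_of_nonneg_left f4 (by positivity)
      _ = p d * (1 - x ^ 2) ^ d * (p d ^ k * δ * (1 - x ^ 2)) := by ring
      _ ≤ p d * (1 - x ^ 2) ^ d * x := mul_le_mul_of_nonneg_left c (by positivity)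
      _ = p d * x * (1 - x ^ 2) ^ d := by ring
      _ ≤ _ := f3

lemma phase2 (d : ℕ) (m : ℝ) (h0 : 0 ≤ m) (hm1 : m ≤ 1) (k : ℕ) :
    0 ≤ (g d)^[k] m ∧ (g d)^[k] m ≤ 1 ∧
      1 - ((g d)^[k] m) ^ 2 ≤ (1 - m ^ 2) ^ ((d + 1) ^ k) := by
  induction k with
  | zero => simp [h0, hm1]
  | succ k ih =>
    rw [Function.iterate_succ_apply']
    obtain ⟨a, b, c⟩ := ih
    generalize (g d)^[k] m = x at *
    obtain ⟨f1, f2, f3, f4⟩ := g_facts d x a b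
    refine ⟨f1, f2, f4.trans ?_⟩
    have he : 0 ≤ 1 - x ^ 2 := by nlinarith
    rw [pow_succ (d + 1) k, pow_mul]
    exact pow_le_pow_left₀ he c _

lemma main_pos (d : ℕ) (δ σ : ℝ) (hδ0 : 0 < δ) (k₁ k₂ : ℕ)
    (h1 : 2 / δ ≤ p d ^ k₁)
    (h2 : σ - 1 ≤ ((d : ℝ) + 1) ^ k₂)
    (m : ℝ) (hm : δ ≤ m) (hm1 : m ≤ 1) :
    |(g d)^[k₁ + k₂] m - 1| ≤ (2 : ℝ) ^ (-σ) := by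
  rw [add_comm, Function.iterate_add_apply]
  obtain ⟨a, b, c⟩ := phase1 d δ m hδ0 hm hm1 k₁
  generalize (g d)^[k₁] m = x at *
  rw [div_le_iff₀ hδ0] at h1
  have he : 0 ≤ 1 - x ^ 2 := by nlinarith
  have h3 : 2 * (1 - x ^ 2) ≤ x := (mul_le_mul_of_nonneg_right h1 he).trans c
  have hx : 3 / 4 ≤ x := by
    by_contra! h
    nlinarith
  have he2 : 1 - x ^ 2 ≤ 7 / 16 := by nlinarith
  obtain ⟨a', b', c'⟩ := phase2 d x a b k₂
  generalize (g d)^[k₂] x = y at *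
  have hN : (d + 1) ^ k₂ ≠ 0 := by positivity
  have h2' : σ - 1 ≤ (((d + 1) ^ k₂ : ℕ) : ℝ) := by push_cast; exact h2
  generalize (d + 1) ^ k₂ = N at *
  have hy : 1 - y ^ 2 ≤ (7 / 16 : ℝ) ^ N := c'.trans (pow_le_pow_left₀ he he2 _)
  have e1 : (7 / 16 : ℝ) ^ N ≤ 7 / 8 * (1 / 2) ^ N := by
    rw [show (7 / 16 : ℝ) = 7 / 8 * (1 / 2) by norm_num, mul_pow]
    refine mul_le_mul_of_nonneg_right ?_ (by positivity)
    exact pow_le_of_le_one (by norm_num) (by norm_num) hN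
  have e2 : (7 / 16 : ℝ) ^ N ≤ 7 / 16 := pow_le_of_le_one (by norm_num) (by norm_num) hN
  have hy34 : 3 / 4 ≤ y := by
    by_contra! h
    nlinarith
  have e3 : 1 - y ≤ 1 / 2 * (1 / 2) ^ N := by nlinarith
  have e4 : (1 / 2 : ℝ) * (1 / 2) ^ N = (2 : ℝ) ^ (-((N : ℝ) + 1)) := by
    rw [Real.rpow_neg (by norm_num), Real.rpow_add (by norm_num), Real.rpow_natCast]
    simp
  rw [abs_sub_comm, abs_of_nonneg (by linarith)]
  rw [e4] at e3
  refine e3.trans (Real.rpow_le_rpow_of_exponent_le (by norm_num) (by linarith))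

lemma g_neg (d : ℕ) (m : ℝ) : g d (-m) = - g d m := by
  rw [g_eq, g_eq]; simp

lemma g_iter_neg (d : ℕ) (k : ℕ) (m : ℝ) : (g d)^[k] (-m) = - (g d)^[k] m := by
  induction k with
  | zero => rfl
  | succ k ih => rw [Function.iterate_succ_apply', Function.iterate_succ_apply', ih, g_neg]

theorem stmt_9 (d : ℕ) (hd : 1 ≤ d) (δ σ : ℝ) (hδ0 : 0 < δ) (hδ1 : δ ≤ 1)
    (hσ : 1 ≤ σ) (k₁ k₂ : ℕ)
    (h1 : 2 / δ ≤ p d ^ k₁)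
    (h2 : σ - 1 ≤ ((d : ℝ) + 1) ^ k₂)
    (m : ℝ) (hm : δ ≤ |m|) (hm1 : |m| ≤ 1) :
    |(g d)^[k₁ + k₂] m - sgn m| ≤ (2 : ℝ) ^ (-σ) := by
  have key := main_pos d δ σ hδ0 k₁ k₂ h1 h2 |m| hm hm1
  have hpos : 0 < |m| := lt_of_lt_of_le hδ0 hm
  rcases lt_or_ge 0 m with h | h
  · rw [abs_of_pos h] at key
    simpa [sgn, h] using key
  · have hne : m ≠ 0 := abs_pos.1 hpos
    rw [abs_of_nonpos h, g_iter_neg] at key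
    have : sgn m = -1 := by simp [sgn, not_lt.2 h, hne]
    rw [this, ← abs_neg]
    convert key using 2
    ring
end

section
/- For every integer d ≥ 1 and every real m ∈ [−1, 1] with m ≠ 0, the sequence of iterates g_d^{(k)}(m) converges to sgn(m) as k → ∞. -/
theorem g_hasDeriv (d : ℕ) (m : ℝ) : HasDerivAt (g d)
    ((2 * d + 1) * ((1 / 4 ^ d : ℝ) * (Nat.choose (2 * d) d)) * (1 - m ^ 2) ^ d) m := by
  induction d with
  | zero =>
    have : g 0 = fun m => m := by funext x; simp [g]
    rw [this]; simpa using hasDerivAt_id' m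
  | succ d ih =>
    have hg : g (d + 1) = fun m => g d m + (1 / 4 ^ (d + 1) : ℝ) *
        (Nat.choose (2 * (d + 1)) (d + 1)) * (m * (1 - m ^ 2) ^ (d + 1)) := by
      funext x; simp only [g]; rw [Finset.sum_range_succ]
    have h1 : HasDerivAt (fun x : ℝ => 1 - x ^ 2) (-(2 * m)) m := by
      simpa using (hasDerivAt_pow 2 m).const_sub 1
    have h2 := ((hasDerivAt_id' m).mul (h1.pow (d + 1))).const_mul
      ((1 / 4 ^ (d + 1) : ℝ) * (Nat.choose (2 * (d + 1)) (d + 1)))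
    have h3 := ih.add h2
    rw [hg]
    refine h3.congr_deriv ?_
    have hc : ((d : ℝ) + 1) * (Nat.choose (2 * (d + 1)) (d + 1)) =
        2 * (2 * d + 1) * (Nat.choose (2 * d) d) := by
      exact_mod_cast Nat.succ_mul_centralBinom_succ d
    have hc' : ((Nat.choose (2 * (d + 1)) (d + 1) : ℕ) : ℝ) =
        2 * (2 * d + 1) * (Nat.choose (2 * d) d) / (d + 1) := by
      rw [eq_div_iff (by positivity), ← hc]; ring
    rw [hc']
    simp only [Nat.add_sub_cancel, Pi.pow_apply]
    push_cast
    field_simp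
    ring

theorem g_le_one (d : ℕ) (m : ℝ) (h0 : 0 ≤ m) (h1 : m ≤ 1) : g d m ≤ 1 := by
  have hmono : MonotoneOn (g d) (Set.Icc 0 1) := by
    apply monotoneOn_of_deriv_nonneg (convex_Icc 0 1)
    · exact fun x _ => (g_hasDeriv d x).continuousAt.continuousWithinAt
    · exact fun x _ => (g_hasDeriv d x).differentiableAt.differentiableWithinAt
    · intro x hx
      rw [interior_Icc] at hx
      rw [(g_hasDeriv d x).deriv]
      have : 0 ≤ 1 - x ^ 2 := by nlinarith [hx.1, hx.2]
      positivity
  have hg1 : g d 1 = 1 := by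
    simp only [g]
    rw [Finset.sum_range_succ']
    simp
  rw [← hg1]
  exact hmono ⟨h0, h1⟩ ⟨zero_le_one, le_rfl⟩ h1

theorem g_ge (d : ℕ) (hd : 1 ≤ d) (m : ℝ) (h0 : 0 ≤ m) (h1 : m ≤ 1) :
    m + m * (1 - m ^ 2) / 2 ≤ g d m := by
  have hy : 0 ≤ 1 - m ^ 2 := by nlinarith
  have : ∑ i ∈ Finset.range 2, (1 / 4 ^ i : ℝ) * (Nat.choose (2 * i) i) * (m * (1 - m ^ 2) ^ i)
      ≤ g d m := by
    apply Finset.sum_le_sum_of_subset_of_nonneg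
    · exact Finset.range_mono (by omega)
    · intros; positivity
  refine le_trans (le_of_eq ?_) this
  simp [Finset.sum_range_succ]
  ring

theorem g_pos_tendsto (d : ℕ) (hd : 1 ≤ d) (m : ℝ) (h0 : 0 < m) (h1 : m ≤ 1) :
    Filter.Tendsto (fun k => (g d)^[k] m) Filter.atTop (nhds 1) := by
  have hb : ∀ k, m ≤ (g d)^[k] m ∧ (g d)^[k] m ≤ 1 := by
    intro k
    induction k with
    | zero => exact ⟨le_rfl, h1⟩
    | succ k ih =>
      rw [Function.iterate_succ_apply']
      have hp := h0.trans_le ih.1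
      refine ⟨?_, g_le_one d _ hp.le ih.2⟩
      have := g_ge d hd _ hp.le ih.2
      have hy : 0 ≤ 1 - ((g d)^[k] m) ^ 2 := by nlinarith [ih.2]
      have := mul_nonneg hp.le hy
      linarith [ih.1]
  have hmono : Monotone (fun k => (g d)^[k] m) := by
    apply monotone_nat_of_le_succ
    intro k
    rw [Function.iterate_succ_apply']
    have ih := hb k
    have hp := h0.trans_le ih.1
    have := g_ge d hd _ hp.le ih.2
    have hy : 0 ≤ 1 - ((g d)^[k] m) ^ 2 := by nlinarith [ih.2]
    have := mul_nonneg hp.le hy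
    linarith
  have hbdd : BddAbove (Set.range (fun k => (g d)^[k] m)) :=
    ⟨1, by rintro _ ⟨k, rfl⟩; exact (hb k).2⟩
  have ht := tendsto_atTop_ciSup hmono hbdd
  set L := ⨆ k, (g d)^[k] m with hL
  have hfix : g d L = L := isFixedPt_of_tendsto_iterate ht (g_hasDeriv d L).continuousAt
  have hL0 : m ≤ L := ge_of_tendsto' ht (fun k => (hb k).1)
  have hL1 : L ≤ 1 := le_of_tendsto' ht (fun k => (hb k).2)
  have hLp := h0.trans_le hL0
  have hge := g_ge d hd L hLp.le hL1
  rw [hfix] at hge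
  have hLe : L = 1 := by
    by_contra hne
    have hlt : L < 1 := lt_of_le_of_ne hL1 hne
    have : 0 < L * (1 - L ^ 2) := mul_pos hLp (by nlinarith)
    linarith
  rwa [hLe] at ht

theorem stmt_10 (d : ℕ) (hd : 1 ≤ d) (m : ℝ) (hm : m ∈ Set.Icc (-1 : ℝ) 1)
    (hm0 : m ≠ 0) :
    Filter.Tendsto (fun k => (g d)^[k] m) Filter.atTop (nhds (sgn m)) := by
  rcases lt_or_gt_of_ne hm0 with h | h
  · have hs : sgn m = -1 := by simp [sgn, hm0, h.le]
    have hodd : Function.Semiconj (fun x : ℝ => -x) (g d) (g d) := by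
      intro x
      simp [g, Finset.sum_neg_distrib]
    have hk : ∀ k, (g d)^[k] m = -((g d)^[k] (-m)) := by
      intro k
      have := (hodd.iterate_right k) (-m)
      simpa using this.symm
    simp only [hk, hs]
    exact (g_pos_tendsto d hd (-m) (by linarith) (by linarith [hm.1])).neg
  · have hs : sgn m = 1 := by simp [sgn, h]
    rw [hs]
    exact g_pos_tendsto d hd m h hm.2
end

section
/- Let R be a commutative ring, h ≥ 1, and A, B two h×h matrices over R with indices taken modulo h. Then A·B = Σ_{k=0}^{h−1} (φ^k(μ(A))) ⊙ (π^k(ζ(B))), where · is matrix multiplication. -/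
/-- `μ(A)_{i,j} = A_{i, i+j}` -/
def matMu {h : ℕ} {R : Type*} (A : Matrix (ZMod h) (ZMod h) R) :
    Matrix (ZMod h) (ZMod h) R :=
  fun i j => A i (i + j)

/-- `ζ(A)_{i,j} = A_{i+j, j}` -/
def matZeta {h : ℕ} {R : Type*} (A : Matrix (ZMod h) (ZMod h) R) :
    Matrix (ZMod h) (ZMod h) R :=
  fun i j => A (i + j) j

/-- `φ(A)_{i,j} = A_{i, j+1}` -/
def matPhi {h : ℕ} {R : Type*} (A : Matrix (ZMod h) (ZMod h) R) :
    Matrix (ZMod h) (ZMod h) R :=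
  fun i j => A i (j + 1)

/-- `π(A)_{i,j} = A_{i+1, j}` -/
def matPi {h : ℕ} {R : Type*} (A : Matrix (ZMod h) (ZMod h) R) :
    Matrix (ZMod h) (ZMod h) R :=
  fun i j => A (i + 1) j

theorem matPhi_iter {h : ℕ} {R : Type*} (k : ℕ) (A : Matrix (ZMod h) (ZMod h) R)
    (i j : ZMod h) : (matPhi^[k] A) i j = A i (j + k) := by
  induction k generalizing A with
  | zero => simp
  | succ k ih =>
    rw [Function.iterate_succ_apply, ih]
    simp only [matPhi]
    push_cast
    rw [add_assoc]

theorem matPi_iter {h : ℕ} {R : Type*} (k : ℕ) (A : Matrix (ZMod h) (ZMod h) R)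
    (i j : ZMod h) : (matPi^[k] A) i j = A (i + k) j := by
  induction k generalizing A with
  | zero => simp
  | succ k ih =>
    rw [Function.iterate_succ_apply, ih]
    simp only [matPi]
    push_cast
    rw [add_assoc]

theorem stmt_14 (R : Type*) [CommRing R] (h : ℕ) [NeZero h]
    (A B : Matrix (ZMod h) (ZMod h) R) :
    A * B = ∑ k ∈ Finset.range h,
      Matrix.hadamard (matPhi^[k] (matMu A)) (matPi^[k] (matZeta B)) := by
  ext i j
  rw [Matrix.mul_apply, Matrix.sum_apply]
  symm
  refine Finset.sum_bij' (fun k _ => i + j + (k : ZMod h)) (fun x _ => (x - (i + j)).val)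
    ?_ ?_ ?_ ?_ ?_
  · intro k _
    exact Finset.mem_univ _
  · intro x _
    exact Finset.mem_range.2 (ZMod.val_lt _)
  · intro k hk
    rw [add_sub_cancel_left]
    exact ZMod.val_cast_of_lt (Finset.mem_range.1 hk)
  · intro x _
    rw [ZMod.natCast_zmod_val]
    ring
  · intro k _
    rw [Matrix.hadamard_apply, matPhi_iter, matPi_iter]
    simp only [matMu, matZeta]
    rw [add_right_comm i (k : ZMod h) j, add_assoc i j]
end

section
/- Let R be a commutative ring, and let t, h be positive integers with t dividing h. Let A be a t×h matrix over R and B an h×h matrix over R, and let Ã be the h×h matrix obtained by vertically stacking h/t copies of A, i.e., Ã_{r,c} = A_{r mod t, c}. Define the h×h matrix M = Σ_{i=0}^{t−1} (φ^i(μ(Ã))) ⊙ (π^i(ζ(B))). Then for all 0 ≤ s < t and 0 ≤ c < h, (A·B)_{s,c} = Σ_{j=0}^{h/t−1} M_{j·t+s, c}. -/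
/-- vertical stacking of `h/t` copies of a `t × h` matrix `A`:
`Ã_{r,c} = A_{r mod t, c}`. -/
def stacked {t h : ℕ} {R : Type*} (A : Matrix (ZMod t) (ZMod h) R) :
    Matrix (ZMod h) (ZMod h) R :=
  fun r c => A ((r.val : ZMod t)) c

theorem aux_sum_block {R : Type*} [AddCommMonoid R] (t m : ℕ) (f : ℕ → R) :
    ∑ k ∈ Finset.range (m * t), f k =
      ∑ j ∈ Finset.range m, ∑ i ∈ Finset.range t, f (j * t + i) := by
  induction m with
  | zero => simp
  | succ n ih => rw [Nat.succ_mul, Finset.sum_range_add, ih, Finset.sum_range_succ]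

theorem aux_sum_zmod {R : Type*} [AddCommMonoid R] (h : ℕ) [NeZero h] (g : ZMod h → R) :
    ∑ k ∈ Finset.range h, g (k : ZMod h) = ∑ x : ZMod h, g x := by
  refine Finset.sum_bij' (fun k _ => (k : ZMod h)) (fun x _ => x.val) ?_ ?_ ?_ ?_ ?_
  · intros; simp
  · intro x _; simpa using ZMod.val_lt x
  · intro k hk; exact ZMod.val_cast_of_lt (by simpa using hk)
  · intro x _; simp
  · intros; rfl

theorem aux_phi {h : ℕ} {R : Type*} (i : ℕ) (A : Matrix (ZMod h) (ZMod h) R) (a b : ZMod h) :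
    (matPhi^[i] A) a b = A a (b + i) := by
  induction i generalizing b with
  | zero => simp
  | succ n ih =>
    rw [Function.iterate_succ_apply']
    show (matPhi^[n] A) a (b + 1) = _
    rw [ih]; congr 1; push_cast; ring

theorem aux_pi {h : ℕ} {R : Type*} (i : ℕ) (A : Matrix (ZMod h) (ZMod h) R) (a b : ZMod h) :
    (matPi^[i] A) a b = A (a + i) b := by
  induction i generalizing a with
  | zero => simp
  | succ n ih =>
    rw [Function.iterate_succ_apply']
    show (matPi^[n] A) (a + 1) b = _
    rw [ih]; congr 1; push_cast; ring

theorem stmt_17 (R : Type*) [CommRing R] (t h : ℕ) [NeZero t] [NeZero h]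
    (hdvd : t ∣ h)
    (A : Matrix (ZMod t) (ZMod h) R) (B : Matrix (ZMod h) (ZMod h) R)
    (s c : ℕ) (hs : s < t) (hc : c < h) :
    (A * B) ((s : ZMod t)) ((c : ZMod h)) =
      ∑ j ∈ Finset.range (h / t),
        (∑ i ∈ Finset.range t,
            Matrix.hadamard (matPhi^[i] (matMu (stacked A))) (matPi^[i] (matZeta B)))
          (((j * t + s : ℕ) : ZMod h)) ((c : ZMod h)) := by
  have hm : h / t * t = h := Nat.div_mul_cancel hdvd
  have key : ∀ j ∈ Finset.range (h / t), 
      (∑ i ∈ Finset.range t,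
            Matrix.hadamard (matPhi^[i] (matMu (stacked A))) (matPi^[i] (matZeta B)))
          (((j * t + s : ℕ) : ZMod h)) ((c : ZMod h)) =
      ∑ i ∈ Finset.range t, (fun x : ZMod h => A (s : ZMod t) (x + (s + c)) * B (x + (s + c)) c)
        ((j * t + i : ℕ) : ZMod h) := by
    intro j hj
    have hj' : j + 1 ≤ h / t := by simpa using hj
    have hlt : j * t + s < h := by nlinarith
    rw [Matrix.sum_apply]
    refine Finset.sum_congr rfl fun i _ => ?_
    rw [Matrix.hadamard_apply, aux_phi, aux_pi]
    simp only [matMu, matZeta, stacked]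
    rw [ZMod.val_cast_of_lt hlt]
    congr 2
    · push_cast; simp
    · push_cast; ring
    · push_cast; ring
  rw [Finset.sum_congr rfl key, ← aux_sum_block t (h / t)
    (fun k => (fun x : ZMod h => A (s : ZMod t) (x + (s + c)) * B (x + (s + c)) c) (k : ZMod h)),
    hm, aux_sum_zmod h
      (fun x : ZMod h => A (s : ZMod t) (x + (s + c)) * B (x + (s + c)) c), Matrix.mul_apply]
  exact (Equiv.sum_comp (Equiv.addRight ((s : ZMod h) + c))
    (fun x => A (s : ZMod t) x * B x c)).symm
end

section
/- Let h ≥ 1 and let U^T be the h²×h² matrix over ℤ defined by U^T_{h·i+j, k} = 1 if k = h·j + i and U^T_{h·i+j, k} = 0 otherwise (for 0 ≤ i, j < h and 0 ≤ k < h²), i.e., the matrix representation of the transpose map on h×h matrices under row-major vector encoding. Then for 0 ≤ s < h², the s-th diagonal vector of U^T is nonzero if and only if s ≡ (h−1)·r (mod h²) for some integer r with −h < r < h. -/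
/-- The `h² × h²` integer matrix representation of the transpose map on `h × h`
matrices under row-major vector encoding: for `0 ≤ i, j < h`, the row `h·i + j`
has a `1` exactly in column `h·j + i` and `0` elsewhere.  (A row `r` decomposes
uniquely as `r = h·(r / h) + (r % h)`, so the nonzero column is
`h·(r % h) + r / h`.) -/
def transposeMat (h : ℕ) : Matrix (ZMod (h ^ 2)) (ZMod (h ^ 2)) ℤ :=
  fun r k => if k = ((h * (r.val % h) + r.val / h : ℕ) : ZMod (h ^ 2)) then 1 else 0

theorem stmt_18 (h : ℕ) (hh : 1 ≤ h) (s : ZMod (h ^ 2)) :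
    (fun i => transposeMat h i (i + s)) ≠ (0 : ZMod (h ^ 2) → ℤ) ↔
      ∃ r : ℤ, -(h : ℤ) < r ∧ r < (h : ℤ) ∧ s = ((((h : ℤ) - 1) * r : ℤ) : ZMod (h ^ 2)) := by
  have hpos : 0 < h := hh
  have : NeZero (h ^ 2) := ⟨by positivity⟩
  rw [Function.ne_iff]
  constructor
  · rintro ⟨i, hi⟩
    have hi' : i + s = ((h * (i.val % h) + i.val / h : ℕ) : ZMod (h ^ 2)) := by
      by_contra hc
      exact hi (if_neg hc)
    have hlt : i.val < h * h := by
      have := ZMod.val_lt i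
      exact this.trans_eq (pow_two h)
    have ha : i.val / h < h := Nat.div_lt_of_lt_mul hlt
    have hb : i.val % h < h := Nat.mod_lt _ hpos
    have hv : i = ((h * (i.val / h) + i.val % h : ℕ) : ZMod (h ^ 2)) := by
      rw [Nat.div_add_mod]
      exact (ZMod.natCast_zmod_val i).symm
    generalize i.val / h = a at *
    generalize i.val % h = b at *
    refine ⟨(b : ℤ) - a, by omega, by omega, ?_⟩
    have : s = ((h * b + a : ℕ) : ZMod (h ^ 2)) - i := by rw [← hi']; ring
    rw [this, hv]
    push_cast
    ring
  · rintro ⟨r, h1, h2, rfl⟩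
    obtain ⟨a, b, ha, hb, rfl⟩ : ∃ a b : ℕ, a < h ∧ b < h ∧ r = (b : ℤ) - a :=
      ⟨(-r).toNat, r.toNat, by omega, by omega, by omega⟩
    refine ⟨((h * a + b : ℕ) : ZMod (h ^ 2)), ?_⟩
    have hlt : h * a + b < h ^ 2 := by nlinarith
    have hv : ((h * a + b : ℕ) : ZMod (h ^ 2)).val = h * a + b := ZMod.val_natCast_of_lt hlt
    have hd : (h * a + b) / h = a := by
      rw [Nat.mul_add_div hpos, Nat.div_eq_of_lt hb, add_zero]
    have hm : (h * a + b) % h = b := by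
      rw [Nat.mul_add_mod, Nat.mod_eq_of_lt hb]
    simp only [transposeMat, hv, hd, hm]
    rw [if_pos]
    · simp
    · push_cast
      ring
end

section
/- The function m ↦ ln(1+m)/ln(1−m) is strictly increasing on the open interval (0, 1). -/
theorem stmt_19 :
    StrictMonoOn (fun m : ℝ => Real.log (1 + m) / Real.log (1 - m))
      (Set.Ioo (0 : ℝ) 1) := by
  rintro a ⟨ha, ha1⟩ b ⟨hb, hb1⟩ hab
  have ht : 0 < a / b := div_pos ha hb
  have ht1 : 0 < 1 - a / b := by
    have := (div_lt_one hb).2 hab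
    linarith
  have hm : a / b * b = a := by field_simp
  have key : ∀ y : ℝ, 0 < y → y ≠ 1 →
      a / b * Real.log y < Real.log (1 - a / b + a / b * y) := by
    intro y hy hy1
    have h := strictConcaveOn_log_Ioi.2 (Set.mem_Ioi.2 one_pos) (Set.mem_Ioi.2 hy)
      (Ne.symm hy1) ht1 ht (by ring)
    simpa [smul_eq_mul] using h
  have h1 := key (1 + b) (by linarith) (by linarith)
  have h2 := key (1 - b) (by linarith) (by linarith)
  rw [show 1 - a / b + a / b * (1 + b) = 1 + a by linear_combination hm] at h1
  rw [show 1 - a / b + a / b * (1 - b) = 1 - a by linear_combination -hm] at h2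
  have p1 : 0 < Real.log (1 + b) := Real.log_pos (by linarith)
  have n1 : Real.log (1 - b) < 0 := Real.log_neg (by linarith) (by linarith)
  have n2 : Real.log (1 - a) < 0 := Real.log_neg (by linarith) (by linarith)
  show Real.log (1 + a) / Real.log (1 - a) < Real.log (1 + b) / Real.log (1 - b)
  rw [← neg_div_neg_eq, ← neg_div_neg_eq (Real.log (1 + b)),
    div_lt_div_iff₀ (by linarith) (by linarith)]
  have e1 := mul_lt_mul_of_neg_right h1 n1
  have e2 := mul_lt_mul_of_pos_left h2 p1
  linarith
end
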